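/- Let k ≥ 1 be an integer and ε ≥ 0 a real. Let f : Finset E → ℝ be non-negative, monotone, submodular, and let O be a finset with |O| = k and f(O) = OPT ≥ 0. Let S be a finset with |S| ≤ k and |S ∩ O| ≥ 2εk, such that: (i) if |S| = k then f(S) ≥ |S| · (1+ε)/2 · OPT/k; and (ii) if |S| < k then f(o|S) < (1+ε)/2 · OPT/k for every o ∈ O. Then f(S) ≥ ((1+ε)/2) · OPT. -/

import Mathlib

/-!
Let `τ = c * OPT / k` be the acceptance threshold, with `c = (1 + ε) / 2`. If `S` is full, its `k`
accepted elements already give `c * OPT`. Otherwise each element of `O \ S` gains at most `τ` over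
`S`, so submodularity and monotonicity give `OPT ≤ f S + #(O \ S) * τ`. Hence `f S ≥ c * OPT` as
soon as `c * (k + #(O \ S)) ≤ k`. A large overlap makes `#(O \ S) ≤ (1 - 2 * ε) * k`, and then the
left-hand side is at most `(1 + ε) / 2 * (2 - 2 * ε) * k = (1 - ε ^ 2) * k`.
-/

open Finset

section Submodular

variable {E R : Type*} [DecidableEq E]

/-- The marginal gain `f(e | S)` of an element `e` with respect to `S`; it is `0` for `e ∈ S`. -/
def marginalGain [Sub R] (f : Finset E → R) (S : Finset E) (e : E) : R :=
  f (insert e S) - f S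

/-- Submodularity of a set function, in its diminishing-returns form. -/
def IsSubmodular [Sub R] [LE R] (f : Finset E → R) : Prop :=
  ∀ X Y : Finset E, X ⊆ Y → ∀ e ∉ Y, marginalGain f Y e ≤ marginalGain f X e

theorem marginalGain_of_mem [AddGroup R] (f : Finset E → R) {S : Finset E} {e : E} (he : e ∈ S) :
    marginalGain f S e = 0 := by
  rw [marginalGain, insert_eq_of_mem he, sub_self]

namespace IsSubmodular

variable [AddCommGroup R] [PartialOrder R] [IsOrderedAddMonoid R] {f : Finset E → R}

theorem map_union_le_add_sum_marginalGain (hf : IsSubmodular f) (S T : Finset E) :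
    f (S ∪ T) ≤ f S + ∑ e ∈ T, marginalGain f S e := by
  induction T using Finset.induction_on with
  | empty => simp
  | insert a T haT ih =>
    have gain_le : marginalGain f (S ∪ T) a ≤ marginalGain f S a := by
      by_cases haS : a ∈ S
      · rw [marginalGain_of_mem f haS, marginalGain_of_mem f (mem_union_left T haS)]
      · exact hf S (S ∪ T) subset_union_left a (by simp [haS, haT])
    calc f (S ∪ insert a T)
        = marginalGain f (S ∪ T) a + f (S ∪ T) := by
          rw [marginalGain, sub_add_cancel, union_insert]
      _ ≤ marginalGain f S a + (f S + ∑ e ∈ T, marginalGain f S e) := add_le_add gain_le ih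
      _ = f S + ∑ e ∈ insert a T, marginalGain f S e := by
          rw [sum_insert haT, add_left_comm]

theorem le_add_card_sdiff_nsmul (hf : IsSubmodular f) (hmono : Monotone f) {O S : Finset E} {τ : R}
    (hgain : ∀ o ∈ O \ S, marginalGain f S o ≤ τ) :
    f O ≤ f S + #(O \ S) • τ :=
  calc f O
      ≤ f (S ∪ O \ S) := hmono (by rw [union_sdiff_self_eq_union]; exact subset_union_right)
    _ ≤ f S + ∑ o ∈ O \ S, marginalGain f S o := hf.map_union_le_add_sum_marginalGain S (O \ S)
    _ ≤ f S + #(O \ S) • τ := by gcongr; exact sum_le_card_nsmul _ _ _ hgain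

end IsSubmodular

end Submodular

theorem half_one_add_mul_card_add_card_sdiff_le {E R : Type*} [DecidableEq E] [Field R]
    [LinearOrder R] [IsStrictOrderedRing R] {O S : Finset E} {ε : R} (hε : -1 ≤ ε)
    (hSO : 2 * ε * #O ≤ #(S ∩ O)) :
    (1 + ε) / 2 * (#O + #(O \ S)) ≤ #O := by
  have card_sdiff_le : (#(O \ S) : R) ≤ (1 - 2 * ε) * #O := by
    have card_add_card : (#(O \ S) : R) + #(S ∩ O) = #O := by
      rw [inter_comm]
      exact_mod_cast card_sdiff_add_card_inter O S
    linarith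
  have half_nonneg : 0 ≤ (1 + ε) / 2 := by linarith
  calc (1 + ε) / 2 * (#O + #(O \ S))
      ≤ (1 + ε) / 2 * (#O + (1 - 2 * ε) * #O) := by gcongr
    _ = #O - ε ^ 2 * #O := by ring
    _ ≤ #O := sub_le_self _ (by positivity)

theorem stmt_8_general {E R : Type*} [DecidableEq E] [Field R] [LinearOrder R]
    [IsStrictOrderedRing R] {f : Finset E → R} (hf : IsSubmodular f) (hmono : Monotone f)
    {O S : Finset E} (hO : 0 ≤ f O) {k : ℕ} (hk : k ≠ 0) {c : R}
    (hc : c * (k + #(O \ S)) ≤ k) (hScard : #S ≤ k)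
    (hfull : #S = k → #S * (c * f O / k) ≤ f S)
    (hgain : #S < k → ∀ o ∈ O \ S, marginalGain f S o ≤ c * f O / k) :
    c * f O ≤ f S := by
  have hk' : (k : R) ≠ 0 := Nat.cast_ne_zero.2 hk
  rcases hScard.eq_or_lt with hSk | hSk
  · simpa only [hSk, mul_div_cancel₀ _ hk'] using hfull hSk
  · have hOS : f O ≤ f S + #(O \ S) * (c * f O / k) := by
      simpa only [nsmul_eq_mul] using hf.le_add_card_sdiff_nsmul hmono (hgain hSk)
    calc c * f O
        = c * (k + #(O \ S)) * (f O / k) - #(O \ S) * (c * f O / k) := by field_simp; ring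
      _ ≤ k * (f O / k) - #(O \ S) * (c * f O / k) := by gcongr
      _ = f O - #(O \ S) * (c * f O / k) := by rw [mul_div_cancel₀ _ hk']
      _ ≤ f S := sub_le_iff_le_add.2 hOS

/-- If `|S ∩ O| ≥ 2εk`, then `f S ≥ (1+ε)/2 · OPT` under the invariants of the
fixed-threshold procedure. -/
theorem stmt_8 {E : Type*} [DecidableEq E]
    (k : ℕ) (hk : 1 ≤ k) (ε : ℝ) (hε : 0 ≤ ε)
    (f : Finset E → ℝ)
    (hnonneg : ∀ X : Finset E, 0 ≤ f X)
    (hmono : ∀ X Y : Finset E, X ⊆ Y → f X ≤ f Y)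
    (hsubmod : ∀ X Y : Finset E, X ⊆ Y → ∀ e ∉ Y,
      f (insert e Y) - f Y ≤ f (insert e X) - f X)
    (O : Finset E) (OPT : ℝ) (hOcard : O.card = k) (hOPT : f O = OPT) (hOPT0 : 0 ≤ OPT)
    (S : Finset E) (hScard : S.card ≤ k)
    (hSO : 2 * ε * (k : ℝ) ≤ ((S ∩ O).card : ℝ))
    (h1 : S.card = k → f S ≥ (S.card : ℝ) * ((1 + ε) / 2 * OPT / k))
    (h2 : S.card < k → ∀ o ∈ O, f (insert o S) - f S < (1 + ε) / 2 * OPT / k) :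
    f S ≥ (1 + ε) / 2 * OPT := by
  subst hOPT hOcard
  exact stmt_8_general hsubmod hmono hOPT0 (Nat.one_le_iff_ne_zero.1 hk)
    (half_one_add_mul_card_add_card_sdiff_le (by linarith) hSO) hScard h1
    fun hSk o ho => (h2 hSk o (mem_sdiff.1 ho).1).le
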